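/- arXiv:1710.07500 — 2 statements merged into one kernel-verified Lean document; each statement's English description precedes it below -/
import Mathlib

section
/- Let κ be a linearly ordered set, r ≥ 1 finite, and c : N(κ) → r a colouring. Suppose W ⊆ κ has order type ω + (r−1), with increasing enumeration W = {α_i : i < ω + (r−1)}, and for each l ≤ r the induced colouring c_{s_l} is constant on the (r+l)-element subsets of W. Then there is an infinite set X ⊆ N(κ) such that c is constant on X+X. -/
/-!
There are `r + 1` patterns `s_0, …, s_r` and only `r` colours, so two patterns `s_l`, `s_m` with
`l < m` receive the same colour `v` on `W`. Put `d = m - l` and let `x_i` take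

* the value `1` on the fixed points `α 0, …, α (2l - 1)`,
* the value `2` on the `i`-th of consecutive blocks of `d` further points of the sequence `α`,
* the value `2` on the fixed points `β 0, …, β (r - m - 1)`, which exist because `m ≥ 1`.

Doubling `x_i` gives `2l` twos followed by `d + (r - m) = r - l` fours, a copy of `s_l`. For
`i < j` the sum `x_i + x_j` has twos on the shared part of `α` and on the two disjoint blocks,
`2l + 2d = 2m` in all, followed by `r - m` fours, a copy of `s_m`. Both sums therefore have
colour `v`, and `X = {x_i}` works. `colour_of_index` produces the copies of a pattern from an
index function on the `α`-part, and `blockVec` is the vector `x_i`.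
-/

open scoped Pointwise

/-- The pattern `s_l`: `2l` many `2`'s followed by `r - l` many `4`'s. -/
def pattern (r l : ℕ) : Fin (r + l) → ℕ := fun p => if (p : ℕ) < 2 * l then 2 else 4

/-- `s * a`: the finitely supported function with support `a` and values given by `s`. -/
noncomputable def star {κ : Type*} {n : ℕ} (s : Fin n → ℕ) (a : Fin n → κ) : κ →₀ ℕ :=
  ∑ p, Finsupp.single (a p) (s p)

/-- If `c` has colour `v` on all copies of the pattern `s_l` inside `W`, then it has colour `v` on
the copy whose support is `α (g 0) < α (g 1) < … < α (g (2l + q - 1))` followed by the first `e`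
terms of `β`. The sequence `B` extends `β` to `ℕ`; its terms past the end of `β` play no role. -/
lemma colour_of_index {κ : Type*} [LinearOrder κ] {r : ℕ} (c : (κ →₀ ℕ) → Fin r)
    (α : ℕ → κ) (β : Fin (r - 1) → κ) (hα : StrictMono α) (hβ : StrictMono β)
    (hαβ : ∀ n i, α n < β i) (B : ℕ → κ) (hB : ∀ i : Fin (r - 1), B i = β i)
    (l q e : ℕ) (v : Fin r)
    (hv : ∀ a : Fin (r + l) → κ, StrictMono a →
        (∀ p, a p ∈ Set.range α ∪ Set.range β) → c (star (pattern r l) a) = v)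
    (hn : 2 * l + q + e = r + l) (he : e ≤ r - 1)
    (g : ℕ → ℕ) (hg : ∀ p p', p < p' → p' < 2 * l + q → g p < g p') :
    c (∑ p ∈ Finset.range (2 * l), Finsupp.single (α (g p)) 2
      + ∑ k ∈ Finset.range q, Finsupp.single (α (g (2 * l + k))) 4
      + ∑ k ∈ Finset.range e, Finsupp.single (B k) 4) = v := by
  have hB' : ∀ k (hk : k < r - 1), B k = β ⟨k, hk⟩ := fun k hk => hB ⟨k, hk⟩
  let A : ℕ → κ := fun p => if p < 2 * l + q then α (g p) else B (p - (2 * l + q))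
  have key := hv (fun p => A p) ?_ ?_
  · rw [← key]
    congr 1
    have h1 : star (pattern r l) (fun p => A p) = ∑ p ∈ Finset.range (2 * l + q + e),
        Finsupp.single (A p) (if p < 2 * l then 2 else 4) := by
      rw [hn]
      exact Fin.sum_univ_eq_sum_range
        (fun p => Finsupp.single (A p) (if p < 2 * l then 2 else 4)) (r + l)
    rw [h1, Finset.sum_range_add, Finset.sum_range_add]
    refine congrArg₂ _ (congrArg₂ _ ?_ ?_) ?_
    · refine Finset.sum_congr rfl fun p hp => ?_
      have hp := Finset.mem_range.1 hp
      simp [A, hp, show p < 2 * l + q by omega]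
    · refine Finset.sum_congr rfl fun p hp => ?_
      have hp := Finset.mem_range.1 hp
      simp [A, hp]
    · refine Finset.sum_congr rfl fun p hp => ?_
      simp [A, show ¬ (2 * l + q + p < 2 * l) by omega]
  · intro p p' hpp
    have hlt : (p : ℕ) < p' := hpp
    have hp' := p'.isLt
    simp only [A]
    split_ifs with h1 h2 h2
    · exact hα (hg _ _ hlt h2)
    · rw [hB' _ (by omega)]
      exact hαβ _ _
    · omega
    · rw [hB' _ (by omega), hB' _ (by omega)]
      apply hβ
      simp only [Fin.mk_lt_mk]
      omega
  · intro p
    have hp := p.isLt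
    simp only [A]
    split_ifs with h1
    · exact Or.inl ⟨_, rfl⟩
    · rw [hB' _ (by omega)]
      exact Or.inr ⟨_, rfl⟩

/-- The vector `x_i`: ones on the first `2l` points of `α`, twos on the `i`-th block of `d`
consecutive points of `α` after those, and twos on the first `e` points of `B`. -/
noncomputable def blockVec {κ : Type*} (α B : ℕ → κ) (l d e i : ℕ) : κ →₀ ℕ :=
  ∑ p ∈ Finset.range (2 * l), Finsupp.single (α p) 1
    + ∑ k ∈ Finset.range d, Finsupp.single (α (2 * l + d * i + k)) 2
    + ∑ k ∈ Finset.range e, Finsupp.single (B k) 2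

lemma blockVec_ne {κ : Type*} (α B : ℕ → κ) (hα : Function.Injective α) (l d e : ℕ) (hd : 0 < d)
    {i j : ℕ} (hij : i < j) : blockVec α B l d e i ≠ blockVec α B l d e j := by
  intro h
  have h := add_left_cancel (add_right_cancel h)
  have hle : d * (i + 1) ≤ d * j := Nat.mul_le_mul_left d hij
  rw [mul_add, mul_one] at hle
  -- The first point of the `i`-th block separates the two vectors.
  have h := DFunLike.congr_fun h (α (2 * l + d * i))
  rw [Finsupp.finsetSum_apply, Finsupp.finsetSum_apply] at h
  have h0 : ∑ k ∈ Finset.range d,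
      (Finsupp.single (α (2 * l + d * j + k)) 2 : κ →₀ ℕ) (α (2 * l + d * i)) = 0 := by
    refine Finset.sum_eq_zero fun k _ => ?_
    rw [Finsupp.single_eq_of_ne']
    intro hk
    have := hα hk
    omega
  rw [h0, Finset.sum_eq_zero_iff] at h
  simpa using h 0 (Finset.mem_range.2 hd)

/-- Lemma 2.1. If `W ⊆ κ` has order type `ω + (r-1)` (an increasing `ω`-sequence `α`
followed by `r-1` elements `β` above all of them) and each induced colouring `c_{s_l}`
(`l ≤ r`) is constant on the `(r+l)`-element subsets of `W`, then there is an infinite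
`X ⊆ N(κ)` with `c` constant on `X + X`. -/
theorem monochromatic_sumset_of_constant_patterns {κ : Type*} [LinearOrder κ]
    (r : ℕ) (hr : 1 ≤ r) (c : (κ →₀ ℕ) → Fin r)
    (α : ℕ → κ) (β : Fin (r - 1) → κ)
    (hα : StrictMono α) (hβ : StrictMono β)
    (hαβ : ∀ n i, α n < β i)
    (hconst : ∀ l : ℕ, l ≤ r → ∃ v : Fin r,
      ∀ a : Fin (r + l) → κ, StrictMono a →
        (∀ p, a p ∈ Set.range α ∪ Set.range β) →
        c (star (pattern r l) a) = v) :
    ∃ X : Set (κ →₀ ℕ), X.Infinite ∧ ∃ v, ∀ z ∈ X + X, c z = v := by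
  have : NeZero r := ⟨by omega⟩
  choose! v hv using hconst
  obtain ⟨l, m, hlm, hm, hvlm⟩ : ∃ l m, l < m ∧ m ≤ r ∧ v l = v m := by
    obtain ⟨x, y, hxy, hvxy⟩ := Fintype.exists_ne_map_eq_of_card_lt
      (fun x : Fin (r + 1) => v x) (by simp)
    rcases lt_or_gt_of_ne hxy with h | h
    · exact ⟨x, y, h, Nat.lt_succ_iff.1 y.isLt, hvxy⟩
    · exact ⟨y, x, h, Nat.lt_succ_iff.1 x.isLt, hvxy.symm⟩
  obtain ⟨d, rfl⟩ := Nat.exists_eq_add_of_le hlm.le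
  obtain ⟨e, he⟩ := Nat.exists_eq_add_of_le hm
  have hd : 0 < d := by omega
  let B : ℕ → κ := fun k => if h : k < r - 1 then β ⟨k, h⟩ else α 0
  have hB : ∀ i : Fin (r - 1), B i = β i := fun i => by simp [B]
  let x := blockVec α B l d e
  have hdiag : ∀ i, c (x i + x i) = v l := by
    intro i
    have key := colour_of_index c α β hα hβ hαβ B hB l d e (v l) (hv l (by omega))
      (by omega) (by omega) (fun p => if p < 2 * l then p else p + d * i)
      (by intro p p' h h'; split_ifs <;> omega)
    rw [← key]
    congr 1
    simp only [x, blockVec]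
    rw [add_add_add_comm, add_add_add_comm (∑ p ∈ Finset.range (2 * l), _)]
    simp only [← Finset.sum_add_distrib, ← Finsupp.single_add]
    refine congrArg₂ _ (congrArg₂ _ ?_ ?_) rfl
    · refine Finset.sum_congr rfl fun p hp => ?_
      rw [if_pos (Finset.mem_range.1 hp)]
    · refine Finset.sum_congr rfl fun k _ => ?_
      rw [if_neg (by omega), add_right_comm]
  have hoff : ∀ i j, i < j → c (x i + x j) = v l := by
    intro i j hij
    have hle : d * (i + 1) ≤ d * j := Nat.mul_le_mul_left d hij
    rw [mul_add, mul_one] at hle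
    -- The last branch sends `2l + d + k` to `2l + d * j + k`, the `j`-th block.
    have key := colour_of_index c α β hα hβ hαβ B hB (l + d) 0 e (v l)
      (hvlm ▸ hv (l + d) hm) (by omega) (by omega)
      (fun p => if p < 2 * l then p else if p < 2 * l + d then p + d * i else p - d + d * j)
      (by intro p p' h h'; split_ifs <;> omega)
    rw [← key]
    congr 1
    simp only [x, blockVec]
    rw [add_add_add_comm, add_add_add_comm (∑ p ∈ Finset.range (2 * l), _),
      show 2 * (l + d) = 2 * l + d + d by ring, Finset.sum_range_add, Finset.sum_range_add,
      Finset.sum_range_zero, add_zero]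
    refine congrArg₂ _ ((add_assoc _ _ _).symm.trans
      (congrArg₂ _ (congrArg₂ _ ?_ ?_) ?_)) ?_
    · rw [← Finset.sum_add_distrib]
      refine Finset.sum_congr rfl fun p hp => ?_
      rw [← Finsupp.single_add, if_pos (Finset.mem_range.1 hp)]
    · refine Finset.sum_congr rfl fun k hk => ?_
      have hk := Finset.mem_range.1 hk
      rw [if_neg (by omega), if_pos (by omega), add_right_comm]
    · refine Finset.sum_congr rfl fun k _ => ?_
      rw [if_neg (by omega), if_neg (by omega),
        show 2 * l + d + k - d + d * j = 2 * l + d * j + k by omega]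
    · rw [← Finset.sum_add_distrib]
      exact Finset.sum_congr rfl fun k _ => (Finsupp.single_add _ _ _).symm
  refine ⟨Set.range x, Set.infinite_range_of_injective ?_, v l, ?_⟩
  · intro i j h
    by_contra hne
    rcases lt_or_gt_of_ne hne with h' | h'
    · exact blockVec_ne α B hα.injective l d e hd h' h
    · exact blockVec_ne α B hα.injective l d e hd h' h.symm
  · rintro _ ⟨_, ⟨i, rfl⟩, _, ⟨j, rfl⟩, rfl⟩
    rcases lt_trichotomy i j with h | rfl | h
    · exact hoff i j h
    · exact hdiag i
    · exact (congrArg c (add_comm _ _)).trans (hoff j i h)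
end

section
/- For every colouring c : ℝ → {0,1} there exists an infinite set X ⊆ ℝ such that c is constant on X+X. -/
open scoped Pointwise

/-!
Suppose `a 0, a 1, …` is an injective sequence of reals and `δ` a real such that, for some colours
`A`, `B`, `D`,

* `c (2 a i + 2 a j) = A` for `i < j`, and also `c (2 a i + 2 δ) = A`;
* `c (a i + a j + 2 a k) = B` for `i < j < k`, and also `c (a i + a j + 2 δ) = B`;
* `c (a i + a j + a k + a l) = D` for `i < j < k < l`.

With only two colours available, two of `A`, `B`, `D` agree, and each coincidence gives a set `X`:

* if `A = B`, take `X = {a n + δ}`: its sums are `2 a n + 2 δ` and `a n + a m + 2 δ`;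
* if `B = D`, take `X = {a 0 / 2 + a 1 / 2 + a n : 2 ≤ n}`: its sums are `a 0 + a 1 + 2 a n` and
  `a 0 + a 1 + a n + a m`;
* if `A = D`, take `X = {a (2 n) + a (2 n + 1)}`: its sums are `2 a (2 n) + 2 a (2 n + 1)` and sums
  of four distinct terms. (This `X` is infinite once `a` is strictly monotone or antitone.)

The pair `(a, δ)` comes from the uncountability of `ℝ`: the point `δ` is chosen outside a countable
set closed under realising types over finite sets, which yields distinct `a n` such that `δ` and
`a n` cannot be told apart by the colourings `x ↦ c (2 a i + 2 x)` and `x ↦ c (a i + a j + 2 x)`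
with `i, j < n` (`exists_indiscernible`). The remaining homogeneity is obtained by passing to a
subsequence with the infinite Ramsey theorem (`exists_homogeneous`), proved here with a
nonprincipal ultrafilter.
-/

/-- The type of `x` over a finite list `L` of parameters: the colours of `2 a + 2 x` and
`a + b + 2 x` for `a`, `b` in `L`. It takes values in a countable set of codes. -/
def typeOver (c : ℝ → Bool) (L : List ℝ) (x : ℝ) : List Bool × List (List Bool) :=
  (L.map fun a => c (2 * a + 2 * x), L.map fun a => L.map fun b => c (a + b + 2 * x))

open Classical in
/-- A real outside `L` whose type over `L` is `p`, if there is one, and `0` otherwise. -/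
noncomputable def realise (c : ℝ → Bool) (L : List ℝ) (p : List Bool × List (List Bool)) : ℝ :=
  if h : ∃ x, x ∉ L ∧ typeOver c L x = p then h.choose else 0

/-- The list of reals built by realising successive types, each over the reals already chosen.
Both the list of types and the resulting list of reals have their latest entry first. -/
noncomputable def realiseList (c : ℝ → Bool) : List (List Bool × List (List Bool)) → List ℝ
  | [] => []
  | p :: ps => realise c (realiseList c ps) p :: realiseList c ps

/-- The first `n` steps (latest first) of the process in which each new real is chosen to have the
same type as `δ` over the reals chosen before it, recorded through the types of `δ`. -/
noncomputable def codes (c : ℝ → Bool) (δ : ℝ) : ℕ → List (List Bool × List (List Bool))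
  | 0 => []
  | n + 1 => typeOver c (realiseList c (codes c δ n)) δ :: codes c δ n

/-- There are distinct reals `a n` and a real `δ` such that `a n` and `δ` have the same type over
`{a i : i < n}`. -/
lemma exists_indiscernible (c : ℝ → Bool) : ∃ (a : ℕ → ℝ) (δ : ℝ), Function.Injective a ∧
    (∀ i n, i < n → c (2 * a i + 2 * a n) = c (2 * a i + 2 * δ)) ∧
    (∀ i j n, i < n → j < n → c (a i + a j + 2 * a n) = c (a i + a j + 2 * δ)) := by
  -- A suitable `δ` exists because only countably many reals are ever chosen,
  -- as lists of types form a countable set.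
  obtain ⟨δ, hδ⟩ : ∃ δ : ℝ, δ ∉ Set.range
      fun q : List (List Bool × List (List Bool)) × (List Bool × List (List Bool)) =>
        realise c (realiseList c q.1) q.2 := by
    by_contra! h
    exact Cardinal.not_countable_real
      ((Set.countable_range _).mono fun x _ => h x)
  have hnot : ∀ ps, δ ∉ realiseList c ps := by
    intro ps
    induction ps with
    | nil => simp [realiseList]
    | cons p ps ih =>
      simp only [realiseList, List.mem_cons, not_or]
      exact ⟨fun h => hδ ⟨(ps, p), h.symm⟩, ih⟩
  set L : ℕ → List ℝ := fun n => realiseList c (codes c δ n) with hL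
  set a : ℕ → ℝ := fun n => realise c (L n) (typeOver c (L n) δ) with ha
  have hspec : ∀ n, a n ∉ L n ∧ typeOver c (L n) (a n) = typeOver c (L n) δ := by
    intro n
    -- `δ` itself witnesses that its type over `L n` is realised outside `L n`.
    have h : ∃ x, x ∉ L n ∧ typeOver c (L n) x = typeOver c (L n) δ := ⟨δ, hnot _, rfl⟩
    have e : a n = h.choose := by simp only [ha, realise]; exact dif_pos h
    rw [e]
    exact h.choose_spec
  have hmem : ∀ i n, i < n → a i ∈ L n := by
    intro i n hin
    induction n with
    | zero => omega
    | succ n ih =>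
      have e : L (n + 1) = a n :: L n := rfl
      rw [e, List.mem_cons]
      rcases Nat.lt_succ_iff_lt_or_eq.mp hin with h | h
      · exact Or.inr (ih h)
      · exact Or.inl (by rw [h])
  refine ⟨a, δ, ?_, ?_, ?_⟩
  · intro i j hij
    by_contra hne
    rcases lt_or_gt_of_ne hne with h | h
    · exact (hspec j).1 (hij ▸ hmem i j h)
    · exact (hspec i).1 (hij ▸ hmem j i h)
  · intro i n hi
    have h := congrArg Prod.fst (hspec n).2
    simp only [typeOver, List.map_inj_left] at h
    exact h _ (hmem i n hi)
  · intro i j n hi hj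
    have h := congrArg Prod.snd (hspec n).2
    simp only [typeOver, List.map_inj_left] at h
    exact h _ (hmem i n hi) _ (hmem j n hj)

open Filter in
/-- The infinite Ramsey theorem for two-colourings of the `r`-element sets of natural numbers. -/
lemma exists_homogeneous (r : ℕ) (f : Finset ℕ → Bool) :
    ∃ φ : ℕ → ℕ, StrictMono φ ∧ ∃ b, ∀ s : Finset ℕ, s.card = r → f (s.image φ) = b := by
  classical
  let U : Ultrafilter ℕ := hyperfilter ℕ
  have hlim : ∀ h : ℕ → Bool, ∃ b, ∀ᶠ n in (U : Filter ℕ), h n = b := by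
    intro h
    rcases U.em (fun n => h n = true) with h1 | h1
    · exact ⟨true, h1⟩
    · exact ⟨false, by simpa using h1⟩
  choose lim hlim using hlim
  -- `g j s` is the `j`-fold iterated limit of `f (s ∪ {n₁, …, nⱼ})` along `U`.
  let g : ℕ → Finset ℕ → Bool := fun j =>
    Nat.rec f (fun _ G s => lim fun n => G (insert n s)) j
  have hg : ∀ j s, ∀ᶠ n in (U : Filter ℕ), g j (insert n s) = g (j + 1) s :=
    fun j s => hlim fun n => g j (insert n s)
  have hgt : ∀ x : ℕ, ∀ᶠ n in (U : Filter ℕ), x < n := fun x =>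
    (Nat.hyperfilter_le_atTop) (eventually_gt_atTop x)
  obtain ⟨φ, hφ⟩ := exists_seq_of_forall_finset_exists
    (fun y : ℕ => ∀ j ∈ Finset.range r, g j {y} = g (j + 1) ∅)
    (fun x y : ℕ => x < y ∧ ∀ s ∈ (Finset.Iic x).powerset, ∀ j ∈ Finset.range r,
      g j (insert y s) = g (j + 1) s) (by
    intro S _
    have h1 : ∀ᶠ y in (U : Filter ℕ), ∀ j ∈ Finset.range r, g j {y} = g (j + 1) ∅ :=
      (eventually_all_finset _).2 fun j _ => by simpa using hg j ∅
    have h2 : ∀ᶠ y in (U : Filter ℕ), ∀ x ∈ S, x < y ∧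
        ∀ s ∈ (Finset.Iic x).powerset, ∀ j ∈ Finset.range r, g j (insert y s) = g (j + 1) s :=
      (eventually_all_finset _).2 fun x _ => (hgt x).and <|
        (eventually_all_finset _).2 fun s _ => (eventually_all_finset _).2 fun j _ => hg j s
    exact (h1.and h2).exists)
  have hmono : StrictMono φ := fun m n hmn => (hφ.2 m n hmn).1
  have key : ∀ s : Finset ℕ, ∀ j, j + s.card ≤ r → g j (s.image φ) = g (j + s.card) ∅ := by
    intro s
    induction s using Finset.induction_on_max with
    | empty => simp
    | insert m s hs ih =>
      intro j hj
      have hm : m ∉ s := fun h => lt_irrefl _ (hs m h)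
      rw [Finset.card_insert_of_notMem hm] at hj ⊢
      have hjr : j ∈ Finset.range r := Finset.mem_range.2 (by omega)
      have step : g j (insert (φ m) (s.image φ)) = g (j + 1) (s.image φ) := by
        rcases s.eq_empty_or_nonempty with rfl | hne
        · simpa using hφ.1 m j hjr
        · refine (hφ.2 (s.max' hne) m (hs _ (s.max'_mem hne))).2 _ ?_ j hjr
          rw [Finset.mem_powerset]
          intro y hy
          obtain ⟨i, hi, rfl⟩ := Finset.mem_image.1 hy
          exact Finset.mem_Iic.2 (hmono.monotone (s.le_max' i hi))
      rw [Finset.image_insert, step, ih (j + 1) (by omega), add_right_comm, add_assoc]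
  refine ⟨φ, hmono, g r ∅, fun s hs => ?_⟩
  have h := key s 0 (by rw [hs, zero_add])
  rw [hs, zero_add] at h
  exact h

/-- Ramsey's theorem for the colours of the sums of `r` terms of a sequence of reals. -/
lemma exists_homogeneous_sum (r : ℕ) (F : ℝ → Bool) (a : ℕ → ℝ) :
    ∃ φ : ℕ → ℕ, StrictMono φ ∧ ∃ b, ∀ s : Finset ℕ, s.card = r →
      F (∑ i ∈ s, a (φ i)) = b := by
  obtain ⟨φ, hφ, b, hb⟩ := exists_homogeneous r fun s => F (∑ i ∈ s, a i)
  refine ⟨φ, hφ, b, fun s hs => ?_⟩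
  rw [← hb s hs, Finset.sum_image hφ.injective.injOn]

/-- The homogeneous sequence from which the monochromatic sumsets are built. -/
lemma exists_configuration (c : ℝ → Bool) : ∃ (a : ℕ → ℝ) (δ : ℝ) (A B D : Bool),
    (StrictMono a ∨ StrictAnti a) ∧
    (∀ i, c (2 * a i + 2 * δ) = A) ∧ (∀ i j, i < j → c (2 * a i + 2 * a j) = A) ∧
    (∀ i j, i < j → c (a i + a j + 2 * δ) = B) ∧
    (∀ i j k, i < j → j < k → c (a i + a j + 2 * a k) = B) ∧
    (∀ i j k l, i < j → j < k → k < l → c (a i + a j + a k + a l) = D) := by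
  obtain ⟨a, δ, hinj, h1, h2⟩ := exists_indiscernible c
  obtain ⟨φ₀, hφ₀, hmono⟩ : ∃ φ : ℕ → ℕ, StrictMono φ ∧
      (StrictMono (a ∘ φ) ∨ StrictAnti (a ∘ φ)) := by
    obtain ⟨g, hg⟩ := exists_increasing_or_nonincreasing_subseq (· < ·) a
    refine ⟨g, g.strictMono, hg.imp (fun h m n hmn => h m n hmn) fun h m n hmn => ?_⟩
    exact lt_of_le_of_ne (not_lt.1 (h m n hmn)) fun e => hmn.ne' (g.injective (hinj e))
  obtain ⟨φ₁, hφ₁, A, hA⟩ := exists_homogeneous_sum 1 (fun x => c (2 * x + 2 * δ)) (a ∘ φ₀)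
  obtain ⟨φ₂, hφ₂, B, hB⟩ := exists_homogeneous_sum 2 (fun x => c (x + 2 * δ)) (a ∘ φ₀ ∘ φ₁)
  obtain ⟨φ₃, hφ₃, D, hD⟩ := exists_homogeneous_sum 4 c (a ∘ φ₀ ∘ φ₁ ∘ φ₂)
  have hψ : StrictMono (φ₀ ∘ φ₁ ∘ φ₂ ∘ φ₃) := hφ₀.comp (hφ₁.comp (hφ₂.comp hφ₃))
  have hA' : ∀ i, c (2 * a (φ₀ (φ₁ (φ₂ (φ₃ i)))) + 2 * δ) = A := fun i => by
    simpa using hA {φ₂ (φ₃ i)} (by simp)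
  have hB' : ∀ i j, i < j → c (a (φ₀ (φ₁ (φ₂ (φ₃ i)))) + a (φ₀ (φ₁ (φ₂ (φ₃ j)))) + 2 * δ) = B := by
    intro i j hij
    have hne : φ₃ i ≠ φ₃ j := (hφ₃ hij).ne
    simpa [Finset.sum_pair hne] using hB {φ₃ i, φ₃ j} (Finset.card_pair hne)
  refine ⟨a ∘ φ₀ ∘ φ₁ ∘ φ₂ ∘ φ₃, δ, A, B, D, ?_, hA', ?_, hB', ?_, ?_⟩
  · have h := hφ₁.comp (hφ₂.comp hφ₃)
    exact hmono.imp (fun H => H.comp h) fun H => H.comp_strictMono h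
  · intro i j hij
    exact (h1 _ _ (hψ hij)).trans (hA' i)
  · intro i j k hij hjk
    exact (h2 _ _ _ (hψ (hij.trans hjk)) (hψ hjk)).trans (hB' i j hij)
  · intro i j k l hij hjk hkl
    have hi : i ∉ ({j, k, l} : Finset ℕ) := by simp; omega
    have hj : j ∉ ({k, l} : Finset ℕ) := by simp; omega
    have h := hD {i, j, k, l} (by
      rw [Finset.card_insert_of_notMem hi, Finset.card_insert_of_notMem hj,
        Finset.card_pair hkl.ne])
    rw [Finset.sum_insert hi, Finset.sum_insert hj, Finset.sum_pair hkl.ne] at h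
    rw [← h]
    simp only [Function.comp_apply]
    congr 1
    ring

/-- To check that the sumset of the range of an injective sequence is monochromatic, it suffices to
consider the sums `x m + x n` with `m < n` and the doubles `x n + x n`. -/
lemma monochromatic_of_seq (c : ℝ → Bool) (x : ℕ → ℝ) (hx : Function.Injective x) (v : Bool)
    (h1 : ∀ n, c (x n + x n) = v) (h2 : ∀ m n, m < n → c (x m + x n) = v) :
    ∃ X : Set ℝ, X.Infinite ∧ ∃ v : Bool, ∀ z ∈ X + X, c z = v := by
  refine ⟨Set.range x, Set.infinite_range_of_injective hx, v, ?_⟩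
  rintro _ ⟨_, ⟨m, rfl⟩, _, ⟨n, rfl⟩, rfl⟩
  rcases lt_trichotomy m n with h | rfl | h
  · exact h2 m n h
  · exact h1 m
  · simpa [add_comm] using h2 n m h

/-- For every 2-colouring `c` of the reals there is an infinite `X ⊆ ℝ` with
`c` constant on `X + X` (repetitions allowed). -/
theorem monochromatic_sumset_two_colours (c : ℝ → Bool) :
    ∃ X : Set ℝ, X.Infinite ∧ ∃ v : Bool, ∀ z ∈ X + X, c z = v := by
  obtain ⟨a, δ, A, B, D, hmono, hA, hA', hB, hB', hD⟩ := exists_configuration c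
  have hinj : Function.Injective a := hmono.elim StrictMono.injective StrictAnti.injective
  have hcases : A = B ∨ B = D ∨ A = D := by
    cases A <;> cases B <;> cases D <;> simp
  rcases hcases with rfl | rfl | rfl
  · refine monochromatic_of_seq c (fun n => a n + δ) (fun m n h => hinj (by simpa using h)) A ?_ ?_
    · intro n
      rw [← hA n]; congr 1; ring
    · intro m n h
      rw [← hB m n h]; congr 1; ring
  · refine monochromatic_of_seq c (fun n => a 0 / 2 + a 1 / 2 + a (n + 2))
      (fun m n h => by simpa using hinj (add_left_cancel h)) B ?_ ?_
    · intro n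
      rw [← hB' 0 1 (n + 2) (by omega) (by omega)]; congr 1; ring
    · intro m n h
      rw [← hD 0 1 (m + 2) (n + 2) (by omega) (by omega) (by omega)]; congr 1; ring
  · refine monochromatic_of_seq c (fun n => a (2 * n) + a (2 * n + 1)) ?_ A ?_ ?_
    · rcases hmono with h | h
      · exact StrictMono.injective fun m n hmn =>
          add_lt_add (h (by omega)) (h (by omega))
      · exact StrictAnti.injective fun m n hmn =>
          add_lt_add (h (by omega)) (h (by omega))
    · intro n
      rw [← hA' (2 * n) (2 * n + 1) (by omega)]; congr 1; ring
    · intro m n h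
      rw [← hD (2 * m) (2 * m + 1) (2 * n) (2 * n + 1) (by omega) (by omega) (by omega)]
      congr 1; ring
end
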